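/- Let (k : K → X, f : X → M) be a Schreier extension with K commutative. Then for all x, y ∈ X and a, b ∈ K one has (k(a) + x) + (k(b) + y) = k(a + f(x) ∗ b) + (x + y); consequently, the relation R_E = {(x, z) ∈ X × X : z = k(a) + x for some a ∈ K} is a submonoid of X × X containing the diagonal (i.e. R_E is an internal reflexive relation on X in the category of monoids). -/

import Mathlib

/-- A monoid extension: `K`, `X` additive monoids (not assumed commutative),
`M` a multiplicative monoid, `k : K → X` an injective monoid homomorphism whose image
is `{x | f x = 1}`, and `f : X → M` a surjective monoid homomorphism. -/
structure MonoidExtension {K X M : Type*} [AddMonoid K] [AddMonoid X] [Monoid M]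
    (k : K → X) (f : X → M) : Prop where
  k_add : ∀ a b : K, k (a + b) = k a + k b
  k_zero : k 0 = 0
  k_inj : Function.Injective k
  ker_eq : ∀ x : X, f x = 1 ↔ x ∈ Set.range k
  f_add : ∀ x y : X, f (x + y) = f x * f y
  f_zero : f 0 = 1
  f_surj : Function.Surjective f

/-- The set `B_m` of representatives of `m`. -/
def Reps {K X M : Type*} [AddMonoid K] [AddMonoid X] [Monoid M]
    (k : K → X) (f : X → M) (m : M) : Set X :=
  {u | f u = m ∧ ∀ x : X, f x = m → ∃! a : K, x = k a + u}

/-- A monoid extension is a Schreier extension if every `m` has a representative. -/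
def IsSchreier {K X M : Type*} [AddMonoid K] [AddMonoid X] [Monoid M]
    (k : K → X) (f : X → M) : Prop :=
  ∀ m : M, (Reps k f m).Nonempty

/-!
Rewriting `(k a + x) + (k b + y)` requires moving `k b` to the left past `x`. A representative `u`
of `f x` does this through the action, and `x = k c + u` does it with the same result, because
`k c` commutes with the image of the commutative monoid `K`.
-/

section AddMonoid

variable {K X : Type*} [AddMonoid K] [AddMonoid X]

theorem map_add_add_map_add_of_addSemiconjBy (k : K →+ X) {x : X} {b b' : K}
    (h : AddSemiconjBy x (k b) (k b')) (a : K) (y : X) :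
    (k a + x) + (k b + y) = k (a + b') + (x + y) :=
  calc (k a + x) + (k b + y) = k a + ((x + k b) + y) := by simp only [add_assoc]
    _ = k a + ((k b' + x) + y) := by rw [h.eq]
    _ = k (a + b') + (x + y) := by simp only [map_add, add_assoc]

/-- The relation `R_E` of left translation by the image of `k`, as a submonoid of `X × X`. The
elements `b'` play the part of `f x ∗ b` in the paper. -/
def leftTranslationRel (k : K →+ X)
    (h : ∀ (x : X) (b : K), ∃ b' : K, AddSemiconjBy x (k b) (k b')) : AddSubmonoid (X × X) where
  carrier := {p | ∃ a : K, p.2 = k a + p.1}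
  zero_mem' := ⟨0, by simp⟩
  add_mem' := by
    rintro ⟨x, x'⟩ ⟨y, y'⟩ ⟨a, (rfl : x' = k a + x)⟩ ⟨b, (rfl : y' = k b + y)⟩
    obtain ⟨b', hb'⟩ := h x b
    exact ⟨a + b', map_add_add_map_add_of_addSemiconjBy k hb' a y⟩

theorem diag_mem_leftTranslationRel (k : K →+ X)
    (h : ∀ (x : X) (b : K), ∃ b' : K, AddSemiconjBy x (k b) (k b')) (x : X) :
    (x, x) ∈ leftTranslationRel k h :=
  ⟨0, by simp⟩

end AddMonoid

section AddCommMonoid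

variable {K X M : Type*} [AddCommMonoid K] [AddMonoid X] [Monoid M]

theorem addSemiconjBy_map_add_left (k : K →+ X) {u : X} {b b' : K}
    (h : AddSemiconjBy u (k b) (k b')) (c : K) : AddSemiconjBy (k c + u) (k b) (k b') :=
  AddSemiconjBy.add_left ((AddCommute.all c b').map k) h

theorem IsSchreier.addSemiconjBy {k : K →+ X} {f : X → M} (hS : IsSchreier k f)
    {star : M → K → K}
    (hstar : ∀ (m : M) (a : K) (u : X), u ∈ Reps k f m → u + k a = k (star m a) + u)
    (x : X) (b : K) : AddSemiconjBy x (k b) (k (star (f x) b)) := by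
  obtain ⟨u, hu⟩ := hS (f x)
  obtain ⟨c, hc, -⟩ := hu.2 x rfl
  simpa only [← hc] using addSemiconjBy_map_add_left k (hstar (f x) b u hu) c

theorem RE_internal_reflexive_relation_general (k : K →+ X) (f : X → M) (hS : IsSchreier k f)
    (star : M → K → K)
    (hstar : ∀ (m : M) (a : K) (u : X), u ∈ Reps k f m → u + k a = k (star m a) + u) :
    (∀ (x y : X) (a b : K), (k a + x) + (k b + y) = k (a + star (f x) b) + (x + y)) ∧
    (∃ S : AddSubmonoid (X × X),
      (S : Set (X × X)) = {p : X × X | ∃ a : K, p.2 = k a + p.1} ∧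
      ∀ x : X, (x, x) ∈ S) := by
  have hsemi (x : X) (b : K) : AddSemiconjBy x (k b) (k (star (f x) b)) :=
    hS.addSemiconjBy hstar x b
  have hex (x : X) (b : K) : ∃ b' : K, AddSemiconjBy x (k b) (k b') :=
    ⟨star (f x) b, hsemi x b⟩
  exact ⟨fun x y a b => map_add_add_map_add_of_addSemiconjBy k (hsemi x b) a y,
    leftTranslationRel k hex, rfl, diag_mem_leftTranslationRel k hex⟩

end AddCommMonoid

/-- Section 5: for a Schreier extension with `K` commutative,
`(k a + x) + (k b + y) = k (a + f x ∗ b) + (x + y)`, and consequently the relation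
`R_E = {(x, z) | ∃ a, z = k a + x}` is a submonoid of `X × X` containing the diagonal
(an internal reflexive relation on `X` in monoids). -/
theorem RE_internal_reflexive_relation {K X M : Type*} [AddCommMonoid K] [AddMonoid X]
    [Monoid M]
    (k : K → X) (f : X → M) (hE : MonoidExtension k f) (hS : IsSchreier k f)
    (star : M → K → K)
    (hstar : ∀ (m : M) (a : K) (u : X), u ∈ Reps k f m → u + k a = k (star m a) + u) :
    (∀ (x y : X) (a b : K), (k a + x) + (k b + y) = k (a + star (f x) b) + (x + y)) ∧
    (∃ S : AddSubmonoid (X × X),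
      (S : Set (X × X)) = {p : X × X | ∃ a : K, p.2 = k a + p.1} ∧
      ∀ x : X, (x, x) ∈ S) := by
  exact RE_internal_reflexive_relation_general ⟨⟨k, hE.k_zero⟩, hE.k_add⟩ f hS star hstar
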